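/- Fix an integer n ≥ 1. Let R = ℂ[a₁,…,aₙ] be a polynomial ring in n variables over ℂ, let P = t^n + a₁ t^{n−1} + … + aₙ ∈ R[t] be the universal monic polynomial of degree n, and let Δ ∈ R be its discriminant, realized as the resultant Res(P, ∂P/∂t) of P with its t-derivative. Then the set {θ ∈ Der_ℂ(R, R) : θ(Δ) ∈ (Δ)} of ℂ-linear derivations of R sending Δ into the principal ideal generated by Δ is an R-submodule of the module of derivations which is a free R-module of rank n. -/

import Mathlib

open Polynomial

/-- The Sylvester matrix of two polynomials `p`, `q`, regarded as having degrees
`m` and `l` respectively: an `(l + m) × (l + m)` matrix whose first `l` rows are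
the shifted coefficient sequences of `p` (in decreasing order of degree) and whose
last `m` rows are the shifted coefficient sequences of `q`. -/
noncomputable def sylvesterMatrix {R : Type} [CommRing R] (p q : R[X]) (m l : ℕ) :
    Matrix (Fin (l + m)) (Fin (l + m)) R := fun i j =>
  if (i : ℕ) < l then
    if (i : ℕ) ≤ (j : ℕ) ∧ (j : ℕ) ≤ (i : ℕ) + m then p.coeff (m + i - j) else 0
  else
    if (i : ℕ) - l ≤ (j : ℕ) ∧ (j : ℕ) ≤ ((i : ℕ) - l) + l then
      q.coeff (l + ((i : ℕ) - l) - j)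
    else 0

/-- The resultant `Res(p, q)` of `p` (of degree `m`) and `q` (of degree `l`),
as the determinant of the Sylvester matrix. -/
noncomputable def resultant {R : Type} [CommRing R] (p q : R[X]) (m l : ℕ) : R :=
  (sylvesterMatrix p q m l).det


namespace LogDisc

/-- block reversal -/
def blockRev (l m : ℕ) : Equiv.Perm (Fin (l + m)) :=
  (finSumFinEquiv.symm.trans (Equiv.sumCongr Fin.revPerm Fin.revPerm)).trans finSumFinEquiv

lemma sylvester_eq {R : Type} [CommRing R] (p q : R[X]) (m l : ℕ) :
    Polynomial.sylvester q p l m =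
      ((sylvesterMatrix p q m l).transpose.submatrix Fin.revPerm id).submatrix id (blockRev l m) := by
  ext i j
  induction j using Fin.addCases with
  | left j =>
    have hj := j.2
    have hi := i.2
    simp only [Polynomial.sylvester, Matrix.of_apply, Fin.addCases_left, Matrix.submatrix_apply,
      Matrix.transpose_apply, sylvesterMatrix, blockRev, Set.mem_Icc, id, Equiv.trans_apply,
      finSumFinEquiv_symm_apply_castAdd, Equiv.sumCongr_apply, Sum.map_inl,
      finSumFinEquiv_apply_left, Fin.revPerm_apply, Fin.val_castAdd, Fin.val_rev]
    rw [if_pos (show l - ((j : ℕ) + 1) < l by omega)]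
    by_cases h : (j : ℕ) ≤ i ∧ (i : ℕ) ≤ j + m
    · rw [if_pos h, if_pos (by omega)]; congr 1; omega
    · rw [if_neg h, if_neg (by omega)]
  | right j =>
    have hj := j.2
    have hi := i.2
    simp only [Polynomial.sylvester, Matrix.of_apply, Fin.addCases_right, Matrix.submatrix_apply,
      Matrix.transpose_apply, sylvesterMatrix, blockRev, Set.mem_Icc, id, Equiv.trans_apply,
      finSumFinEquiv_symm_apply_natAdd, Equiv.sumCongr_apply, Sum.map_inr,
      finSumFinEquiv_apply_right, Fin.revPerm_apply, Fin.val_natAdd, Fin.val_rev]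
    rw [if_neg (show ¬ (l + (m - ((j : ℕ) + 1)) < l) by omega)]
    by_cases h : (j : ℕ) ≤ i ∧ (i : ℕ) ≤ j + l
    · rw [if_pos h, if_pos (by omega)]; congr 1; omega
    · rw [if_neg h, if_neg (by omega)]

lemma resultant_pm {R : Type} [CommRing R] (p q : R[X]) (m l : ℕ) :
    _root_.resultant p q m l = Polynomial.resultant p q m l ∨
    _root_.resultant p q m l = - Polynomial.resultant p q m l := by
  have h1 : Polynomial.resultant q p l m = _root_.resultant p q m l ∨
      Polynomial.resultant q p l m = - _root_.resultant p q m l := by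
    rw [Polynomial.resultant, sylvester_eq, Matrix.det_permute', Matrix.det_permute,
      Matrix.det_transpose]
    rcases Int.units_eq_one_or (Equiv.Perm.sign (blockRev l m)) with h | h <;>
    rcases Int.units_eq_one_or (Equiv.Perm.sign (Fin.revPerm (n := l + m))) with h' | h' <;>
    simp [h, h', _root_.resultant]
  rw [Polynomial.resultant_comm p q]
  rcases neg_one_pow_eq_or R (m * l) with h | h <;> rcases h1 with h1 | h1 <;> simp [h, h1]

/-! ### the ring of roots -/

variable {n : ℕ}


/-- The map sending coefficients to elementary symmetric polynomials -/
noncomputable def phi (n : ℕ) : MvPolynomial (Fin n) ℂ →ₐ[ℂ] MvPolynomial (Fin n) ℂ :=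
  MvPolynomial.aeval (fun i : Fin n ↦ MvPolynomial.esymm (Fin n) ℂ (i + 1))

lemma phi_eq (F : MvPolynomial (Fin n) ℂ) : phi n F = (MvPolynomial.esymmAlgHom (Fin n) ℂ n F).val :=
  (MvPolynomial.esymmAlgHom_apply F).symm

lemma phi_inj : Function.Injective (phi n) := by
  intro F G h
  rw [phi_eq, phi_eq] at h
  exact MvPolynomial.esymmAlgHom_injective (σ := Fin n) ℂ (by simp) (Subtype.ext h)

lemma phi_symm (F : MvPolynomial (Fin n) ℂ) (e : Equiv.Perm (Fin n)) : MvPolynomial.rename e (phi n F) = phi n F := by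
  rw [phi_eq]; exact (MvPolynomial.esymmAlgHom (Fin n) ℂ n F).2 e

lemma phi_surj (F : MvPolynomial (Fin n) ℂ) (h : F.IsSymmetric) : ∃ G, phi n G = F := by
  obtain ⟨G, hG⟩ := MvPolynomial.esymmAlgHom_surjective (σ := Fin n) (n := n) ℂ (by simp) ⟨F, h⟩
  exact ⟨G, by rw [phi_eq, hG]⟩

/-- linear combination -/
noncomputable def lin (c : Fin n → MvPolynomial (Fin n) ℂ) : (MvPolynomial (Fin n) ℂ)[X] := ∑ i : Fin n, C (c i) * X ^ (n - 1 - (i : ℕ))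

/-- universal polynomial -/
noncomputable def uP (n : ℕ) : (MvPolynomial (Fin n) ℂ)[X] := X ^ n + lin MvPolynomial.X

lemma lin_degree (c : Fin n → MvPolynomial (Fin n) ℂ) : (lin c).degree < n := by
  refine mem_degreeLT.1 (Submodule.sum_mem _ fun i _ => mem_degreeLT.2 ?_)
  refine lt_of_le_of_lt (degree_C_mul_X_pow_le _ _) ?_
  have := i.2
  exact_mod_cast (by omega : n - 1 - (i : ℕ) < n)

lemma lin_coeff (c : Fin n → MvPolynomial (Fin n) ℂ) (i : Fin n) : (lin c).coeff (n - 1 - i) = c i := by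
  rw [lin, finsetSum_coeff, Finset.sum_eq_single i]
  · simp
  · intro j _ hj
    rw [coeff_C_mul_X_pow, if_neg]
    have := i.2; have := j.2
    intro h; apply hj; ext; omega
  · simp

lemma lin_surj (f : (MvPolynomial (Fin n) ℂ)[X]) (hf : f.degree < n) : f = lin (fun i => f.coeff (n - 1 - i)) := by
  ext k
  by_cases hk : k < n
  · have := lin_coeff (fun i => f.coeff (n - 1 - i)) ⟨n - 1 - k, by omega⟩
    simp only [show n - 1 - (n - 1 - k) = k by omega] at this
    rw [this]
  · rw [coeff_eq_zero_of_degree_lt, coeff_eq_zero_of_degree_lt]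
    · exact lt_of_lt_of_le (lin_degree _) (by exact_mod_cast (by omega : n ≤ k))
    · exact lt_of_lt_of_le hf (by exact_mod_cast (by omega : n ≤ k))

lemma uP_monic : (uP n).Monic := by
  rw [uP]; exact monic_X_pow_add (lin_degree _)

lemma uP_degree : (uP n).degree = n := by
  rw [uP, degree_add_eq_left_of_degree_lt]
  · simp
  · simpa using lin_degree _

/-- product of linear forms -/
noncomputable def prodP (n : ℕ) : (MvPolynomial (Fin n) ℂ)[X] := ∏ i : Fin n, (X + C (MvPolynomial.X i))

lemma uP_map : (uP n).map (phi n : MvPolynomial (Fin n) ℂ →+* MvPolynomial (Fin n) ℂ) = prodP n := by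
  rw [prodP, MvPolynomial.prod_C_add_X_eq_sum_esymm, Finset.sum_range_succ', uP, lin, add_comm]
  simp only [Polynomial.map_add, Polynomial.map_sum, Polynomial.map_mul, map_C, Polynomial.map_pow,
    map_X, Fintype.card_fin]
  rw [Finset.sum_range]
  congr 1
  · refine Finset.sum_congr rfl fun i _ => ?_
    rw [show n - 1 - (i : ℕ) = n - (i + 1) by omega]
    simp [phi]
  · simp

/-- value of the derivative at the root -/
noncomputable def W (i : Fin n) : MvPolynomial (Fin n) ℂ := ∏ j ∈ Finset.univ.erase i, (MvPolynomial.X j - MvPolynomial.X i)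

/-- partial products -/
noncomputable def part (i : Fin n) : (MvPolynomial (Fin n) ℂ)[X] := ∏ j ∈ Finset.univ.erase i, (X + C (MvPolynomial.X j))

/-- evaluation at root -/
noncomputable def ev (i : Fin n) (f : (MvPolynomial (Fin n) ℂ)[X]) : MvPolynomial (Fin n) ℂ := (f.map (phi n : MvPolynomial (Fin n) ℂ →+* MvPolynomial (Fin n) ℂ)).eval (-MvPolynomial.X i)

lemma part_eval_self (i : Fin n) : (part i).eval (-MvPolynomial.X i) = W i := by
  simp [part, W, eval_prod, sub_eq_neg_add]

lemma part_eval_ne (i j : Fin n) (h : i ≠ j) : (part j).eval (-MvPolynomial.X i) = 0 := by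
  rw [part, eval_prod, Finset.prod_eq_zero (i := i)] <;> simp [h]

lemma deriv_prodP : derivative (prodP n) = ∑ i, part i := by
  rw [prodP, derivative_prod_finset]
  simp [part]

lemma ev_deriv (i : Fin n) : ev i (derivative (uP n)) = W i := by
  rw [ev, ← derivative_map, uP_map, deriv_prodP, eval_finsetSum, Finset.sum_eq_single i,
    part_eval_self]
  · intro j _ hj; exact part_eval_ne _ _ hj.symm
  · simp

lemma ev_uP (i : Fin n) : ev i (uP n) = 0 := by
  rw [ev, uP_map, prodP, eval_prod, Finset.prod_eq_zero (i := i)] <;> simp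

lemma ev_mul (i : Fin n) (f g) : ev i (f * g) = ev i f * ev i g := by simp [ev]

lemma ev_mod (i : Fin n) (f) : ev i (f %ₘ uP n) = ev i f := by
  conv_rhs => rw [← modByMonic_add_div f (uP n)]
  have h := ev_mul i (uP n) (f /ₘ uP n)
  rw [ev_uP, zero_mul] at h
  simp only [ev, Polynomial.map_add, eval_add] at *
  rw [h, add_zero]

lemma eq_of_eval (f g : (MvPolynomial (Fin n) ℂ)[X]) (hf : f.degree < n) (hg : g.degree < n)
    (h : ∀ i : Fin n, f.eval (-MvPolynomial.X i) = g.eval (-MvPolynomial.X i)) : f = g := by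
  refine eq_of_degrees_lt_of_eval_index_eq (Finset.univ : Finset (Fin n))
    (v := fun i => -MvPolynomial.X i) ?_ (by simpa using hf) (by simpa using hg) (by simpa using h)
  intro i _ j _ hij
  exact MvPolynomial.X_injective (neg_injective hij)

lemma eq_of_ev (f g : (MvPolynomial (Fin n) ℂ)[X]) (hf : f.degree < n) (hg : g.degree < n)
    (h : ∀ i : Fin n, ev i f = ev i g) : f = g := by
  apply Polynomial.map_injective (phi n : MvPolynomial (Fin n) ℂ →+* MvPolynomial (Fin n) ℂ) phi_inj
  exact eq_of_eval _ _ (lt_of_le_of_lt degree_map_le hf) (lt_of_le_of_lt degree_map_le hg) h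

/-- discriminant in the roots -/
noncomputable def V (n : ℕ) : MvPolynomial (Fin n) ℂ := ∏ i : Fin n, W i

lemma phi_disc : phi n (_root_.resultant (uP n) (derivative (uP n)) n (n - 1)) = V n ∨
    phi n (_root_.resultant (uP n) (derivative (uP n)) n (n - 1)) = - V n := by
  have hd : (prodP n).natDegree = n := by
    rw [← uP_map, uP_monic.natDegree_map]
    exact natDegree_eq_of_degree_eq_some uP_degree
  have hd' : (derivative (prodP n)).natDegree ≤ n - 1 := by
    refine (natDegree_derivative_le _).trans ?_
    rw [hd]
  have key : phi n (Polynomial.resultant (uP n) (derivative (uP n)) n (n - 1)) = V n := by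
    have h := Polynomial.resultant_map_map (uP n) (derivative (uP n)) n (n - 1) (phi n : MvPolynomial (Fin n) ℂ →+* MvPolynomial (Fin n) ℂ)
    change _ = phi n _ at h
    rw [← h, ← derivative_map, uP_map]
    have h2 := Polynomial.resultant_prod_left Finset.univ
      (fun i : Fin n => X + C (MvPolynomial.X i : MvPolynomial (Fin n) ℂ)) (derivative (prodP n)) (n - 1) (by simp) hd'
    change Polynomial.resultant (prodP n) _ (prodP n).natDegree _ = _ at h2
    rw [hd] at h2
    rw [h2, V]
    refine Finset.prod_congr rfl fun i _ => ?_
    rw [natDegree_X_add_C, Polynomial.resultant_X_add_C_left _ _ _ hd', ← uP_map, derivative_map]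
    exact ev_deriv i
  rcases resultant_pm (uP n) (derivative (uP n)) n (n - 1) with h | h
  · left; rw [h, key]
  · right; rw [h, map_neg, key]

lemma deriv_coeff_prod {B ι : Type} [CommRing B] [Algebra ℂ B] [DecidableEq ι]
    (D : Derivation ℂ B B) (x : ι → B) (s : Finset ι) (m : ℕ) :
    D ((∏ j ∈ s, (X + C (x j))).coeff m) =
    (∑ i ∈ s, C (D (x i)) * ∏ j ∈ s.erase i, (X + C (x j))).coeff m := by
  induction s using Finset.induction_on generalizing m with
  | empty => simp [coeff_one, apply_ite D]
  | insert a s ha ih =>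
    have e : ∑ i ∈ insert a s, C (D (x i)) * ∏ j ∈ (insert a s).erase i, (X + C (x j)) =
        C (D (x a)) * ∏ j ∈ s, (X + C (x j)) +
        (X + C (x a)) * ∑ i ∈ s, C (D (x i)) * ∏ j ∈ s.erase i, (X + C (x j)) := by
      rw [Finset.sum_insert ha, Finset.erase_insert ha, Finset.mul_sum]
      congr 1
      refine Finset.sum_congr rfl fun i hi => ?_
      have hia : a ≠ i := fun h => ha (h ▸ hi)
      rw [Finset.erase_insert_of_ne hia, Finset.prod_insert]
      · ring
      · simp [ha]
    rw [e, Finset.prod_insert ha]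
    generalize (∑ i ∈ s, C (D (x i)) * ∏ j ∈ s.erase i, (X + C (x j))) = G at *
    generalize (∏ j ∈ s, (X + C (x j))) = F at *
    cases m with
    | zero =>
      simp only [add_mul, coeff_add, coeff_X_mul_zero, coeff_C_mul, map_add, map_zero,
        Derivation.leibniz, smul_eq_mul, ih]
      ring
    | succ m =>
      simp only [add_mul, coeff_add, coeff_X_mul, coeff_C_mul, map_add,
        Derivation.leibniz, smul_eq_mul, ih]
      ring

lemma key_identity (θ : Derivation ℂ (MvPolynomial (Fin n) ℂ) (MvPolynomial (Fin n) ℂ)) (s : MvPolynomial (Fin n) ℂ) (z : Fin n → MvPolynomial (Fin n) ℂ)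
    (h : C s * (lin fun i => θ (MvPolynomial.X i)).map (phi n : MvPolynomial (Fin n) ℂ →+* MvPolynomial (Fin n) ℂ) = ∑ i, C (z i) * part i)
    (F : MvPolynomial (Fin n) ℂ) : s * phi n (θ F) = MvPolynomial.mkDerivation ℂ z (phi n F) := by
  induction F using MvPolynomial.induction_on with
  | C a => simp [phi]
  | add p q hp hq => simp only [map_add, mul_add, hp, hq]
  | mul_X p k hp =>
    have hX : s * phi n (θ (MvPolynomial.X k)) =
        MvPolynomial.mkDerivation ℂ z (phi n (MvPolynomial.X k)) := by
      have h1 := congrArg (fun f => coeff f (n - 1 - k)) h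
      simp only [coeff_C_mul, coeff_map, lin_coeff] at h1
      have h2 := deriv_coeff_prod (MvPolynomial.mkDerivation ℂ z) MvPolynomial.X Finset.univ (n - 1 - k)
      simp only [MvPolynomial.mkDerivation_X] at h2
      change _ = (∑ i, C (z i) * part i).coeff _ at h2
      change s * phi n _ = _ at h1
      rw [h1, ← h2, MvPolynomial.prod_X_add_C_coeff]
      · have := k.2
        rw [Fintype.card_fin, show n - (n - 1 - (k : ℕ)) = k + 1 by omega]
        simp [phi]
      · rw [Fintype.card_fin]; omega
    simp only [Derivation.leibniz, map_add, map_mul, smul_eq_mul, mul_add]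
    rw [mul_left_comm, hX, mul_left_comm s, hp]

lemma part_degree (i : Fin n) : (part i).degree < n := by
  have h : (part i).natDegree < n := by
    rw [part, natDegree_prod _ _ (fun j _ => X_add_C_ne_zero _)]
    simp [i.pos]
  exact lt_of_le_of_lt degree_le_natDegree (by exact_mod_cast h)

lemma interp (q : (MvPolynomial (Fin n) ℂ)[X]) (hq : q.degree < n) (z : Fin n → MvPolynomial (Fin n) ℂ)
    (h : ∀ i, q.eval (-MvPolynomial.X i) = z i * W i) : q = ∑ i, C (z i) * part i := by
  apply eq_of_eval _ _ hq
  · refine mem_degreeLT.1 (Submodule.sum_mem _ fun i _ => mem_degreeLT.2 ?_)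
    exact lt_of_le_of_lt (by rw [← smul_eq_C_mul]; exact degree_smul_le _ _) (part_degree i)
  · intro i
    rw [h, eval_finsetSum, Finset.sum_eq_single i]
    · simp [part_eval_self]
    · intro j _ hj; simp [part_eval_ne _ _ hj.symm]
    · simp

lemma key_identity' (θ : Derivation ℂ (MvPolynomial (Fin n) ℂ) (MvPolynomial (Fin n) ℂ)) (s : MvPolynomial (Fin n) ℂ) (z : Fin n → MvPolynomial (Fin n) ℂ)
    (h : ∀ i, s * ev i (lin fun i => θ (MvPolynomial.X i)) = z i * W i)
    (F : MvPolynomial (Fin n) ℂ) : s * phi n (θ F) = MvPolynomial.mkDerivation ℂ z (phi n F) := by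
  apply key_identity
  apply interp
  · refine lt_of_le_of_lt (by rw [← smul_eq_C_mul]; exact degree_smul_le _ _) (lt_of_le_of_lt degree_map_le (lin_degree _))
  · intro i
    rw [eval_mul, eval_C]
    exact h i

lemma dvd_deriv_prod {B ι : Type} [CommRing B] [Algebra ℂ B] (D : Derivation ℂ B B)
    (s : Finset ι) (f : ι → B)
    (h : ∀ i ∈ s, f i ∣ D (f i)) : ∏ i ∈ s, f i ∣ D (∏ i ∈ s, f i) := by
  classical
  induction s using Finset.induction_on with
  | empty => simp
  | insert a s ha ih =>
    rw [Finset.prod_insert ha, Derivation.leibniz, smul_eq_mul, smul_eq_mul]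
    refine dvd_add (mul_dvd_mul_left _ (ih fun i hi => h i (Finset.mem_insert_of_mem hi))) ?_
    rw [mul_comm (f a)]
    exact mul_dvd_mul_left _ (h a (Finset.mem_insert_self _ _))

lemma W_ne_zero (i : Fin n) : W i ≠ 0 := by
  rw [W, Finset.prod_ne_zero_iff]
  intro j hj
  rw [sub_ne_zero]
  exact fun h => (Finset.ne_of_mem_erase hj) (MvPolynomial.X_injective h)

lemma V_ne_zero : V n ≠ 0 := Finset.prod_ne_zero_iff.2 fun i _ => W_ne_zero i

/-- forward direction -/
lemma forward (Δ : MvPolynomial (Fin n) ℂ) (hΔ : phi n Δ = V n ∨ phi n Δ = - V n)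
    (θ : Derivation ℂ (MvPolynomial (Fin n) ℂ) (MvPolynomial (Fin n) ℂ)) (g : (MvPolynomial (Fin n) ℂ)[X])
    (h : ∀ i, ev i (lin fun i => θ (MvPolynomial.X i)) = ev i g * W i) : Δ ∣ θ Δ := by
  have h1 := key_identity' θ 1 (fun i => ev i g) (by simpa using h) Δ
  rw [one_mul] at h1
  have h2 : V n ∣ MvPolynomial.mkDerivation ℂ (fun i => ev i g) (V n) := by
    refine dvd_deriv_prod _ _ _ fun i _ => dvd_deriv_prod _ _ _ fun j _ => ?_
    rw [map_sub, MvPolynomial.mkDerivation_X, MvPolynomial.mkDerivation_X]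
    have := sub_dvd_eval_sub (-MvPolynomial.X j) (-MvPolynomial.X i) (g.map (phi n : MvPolynomial (Fin n) ℂ →+* MvPolynomial (Fin n) ℂ))
    refine dvd_trans ?_ this
    rw [← neg_dvd]
    exact dvd_of_eq (by ring)
  have h3 : phi n Δ ∣ phi n (θ Δ) := by
    rw [h1]
    rcases hΔ with h | h <;> rw [h]
    · exact h2
    · rw [map_neg, neg_dvd, dvd_neg]; exact h2
  have h0 : phi n Δ ≠ 0 := by
    rcases hΔ with h | h <;> rw [h]
    · exact V_ne_zero
    · exact neg_ne_zero.2 V_ne_zero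
  obtain ⟨k, hk⟩ := h3
  obtain ⟨k', rfl⟩ := phi_surj k (by
    intro e
    apply mul_left_cancel₀ h0
    rw [← hk]
    conv_rhs => rw [← phi_symm _ e, hk, map_mul, phi_symm])
  exact ⟨k', phi_inj (by rw [hk, map_mul])⟩

/-- substitution of the variable `i` by `j` -/
noncomputable def psi (i j : Fin n) : MvPolynomial (Fin n) ℂ →ₐ[ℂ] MvPolynomial (Fin n) ℂ :=
  MvPolynomial.aeval (fun k => if k = i then MvPolynomial.X j else MvPolynomial.X k)

lemma psi_X (i j k : Fin n) : psi i j (MvPolynomial.X k) = MvPolynomial.X (if k = i then j else k) := by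
  rw [psi, MvPolynomial.aeval_X]; split_ifs <;> rfl

lemma psi_dvd (i j : Fin n) (F : MvPolynomial (Fin n) ℂ) :
    (MvPolynomial.X i - MvPolynomial.X j) ∣ F ↔ psi i j F = 0 := by
  constructor
  · rintro ⟨G, rfl⟩
    rw [map_mul, map_sub, psi_X, psi_X, if_pos rfl]
    split_ifs <;> simp
  · intro h
    have key : (MvPolynomial.X i - MvPolynomial.X j : MvPolynomial (Fin n) ℂ) ∣ F - psi i j F := by
      clear h
      induction F using MvPolynomial.induction_on with
      | C a => simp [psi]
      | add p q hp hq =>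
        rw [map_add, add_sub_add_comm]; exact dvd_add hp hq
      | mul_X p k hp =>
        rw [map_mul, psi_X]
        have h1 : p * MvPolynomial.X k - psi i j p * MvPolynomial.X (if k = i then j else k) =
          (p - psi i j p) * MvPolynomial.X k +
            psi i j p * (MvPolynomial.X k - MvPolynomial.X (if k = i then j else k)) := by ring
        rw [h1]
        refine dvd_add (hp.mul_right _) (Dvd.dvd.mul_left ?_ _)
        split_ifs with hk
        · rw [hk]
        · simp
    rwa [h, sub_zero] at key

lemma prime_sub {i j : Fin n} (h : i ≠ j) : Prime (MvPolynomial.X i - MvPolynomial.X j : MvPolynomial (Fin n) ℂ) := by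
  refine ⟨?_, ?_, ?_⟩
  · rw [sub_ne_zero]; exact fun h' => h (MvPolynomial.X_injective h')
  · intro hu
    have := (psi_dvd i j 1).1 hu.dvd
    simp at this
  · intro a b hab
    rw [psi_dvd, map_mul, mul_eq_zero] at hab
    rwa [psi_dvd, psi_dvd]

lemma psi_ne {i j k l : Fin n} (hkl : k ≠ l) (h1 : ¬ (k = i ∧ l = j)) (h2 : ¬ (k = j ∧ l = i)) :
    psi i j (MvPolynomial.X k - MvPolynomial.X l) ≠ 0 := by
  rw [map_sub, psi_X, psi_X, sub_ne_zero]
  intro h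
  have := MvPolynomial.X_injective h
  split_ifs at this <;> simp_all

lemma relprime_sub {i j k l : Fin n} (hij : i ≠ j) (hkl : k ≠ l) (h1 : ¬ (k = i ∧ l = j))
    (h2 : ¬ (k = j ∧ l = i)) :
    IsRelPrime (MvPolynomial.X i - MvPolynomial.X j : MvPolynomial (Fin n) ℂ) (MvPolynomial.X k - MvPolynomial.X l) := by
  rw [(prime_sub hij).irreducible.isRelPrime_iff_not_dvd, psi_dvd]
  exact psi_ne hkl h1 h2

lemma dvd_mkDerivation (p : MvPolynomial (Fin n) ℂ) (z : Fin n → MvPolynomial (Fin n) ℂ) (h : ∀ k, p ∣ z k) (F : MvPolynomial (Fin n) ℂ) :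
    p ∣ MvPolynomial.mkDerivation ℂ z F := by
  induction F using MvPolynomial.induction_on with
  | C a => simp
  | add a b ha hb => rw [map_add]; exact dvd_add ha hb
  | mul_X a k ha =>
    rw [Derivation.leibniz, MvPolynomial.mkDerivation_X]
    exact dvd_add ((h k).mul_left _) (ha.mul_left _)

lemma abstract_step {B : Type} [CommRing B] [IsDomain B] [Algebra ℂ B] (D : Derivation ℂ B B)
    (p U f T S V : B) (hp : p ≠ 0) (hV : V = -(p ^ 2 * U)) (hD : D V = V ^ 2 * f)
    (hDp : D p = p * (T * S)) (hU : p ∣ D U) : p ∣ 2 * (T * S * U) := by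
  obtain ⟨r, hr⟩ := hU
  subst hV
  rw [map_neg, Derivation.leibniz, Derivation.leibniz_pow, hDp, hr] at hD
  simp only [smul_eq_mul, nsmul_eq_mul] at hD
  have h2 : p ^ 2 * (2 * (T * S * U)) = p ^ 2 * (p * (-(p * U ^ 2 * f) - r)) := by
    linear_combination (exp := 1) -hD
  exact ⟨_, mul_left_cancel₀ (pow_ne_zero 2 hp) h2⟩

lemma psi_ev (q : (MvPolynomial (Fin n) ℂ)[X]) (i j : Fin n) : psi i j (ev i q) = psi i j (ev j q) := by
  rw [← sub_eq_zero, ← map_sub, ← psi_dvd]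
  have := sub_dvd_eval_sub (-MvPolynomial.X i) (-MvPolynomial.X j) (q.map (phi n : MvPolynomial (Fin n) ℂ →+* MvPolynomial (Fin n) ℂ))
  refine dvd_trans ?_ this
  rw [← neg_dvd]
  exact dvd_of_eq (by ring)

set_option maxHeartbeats 1000000 in
lemma root_dvd (q : (MvPolynomial (Fin n) ℂ)[X]) (f : MvPolynomial (Fin n) ℂ)
    (hZ : MvPolynomial.mkDerivation ℂ (fun i => ev i q * ∏ k ∈ Finset.univ.erase i, W k) (V n)
      = V n ^ 2 * f) {i j : Fin n} (hij : i ≠ j) :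
    (MvPolynomial.X i - MvPolynomial.X j) ∣ ev i q := by
  set s : Finset (Fin n) := (Finset.univ.erase i).erase j with hs
  have hs' : (Finset.univ.erase j).erase i = s := Finset.erase_right_comm
  let w : Fin n → MvPolynomial (Fin n) ℂ := fun a => ∏ k ∈ s, (MvPolynomial.X k - MvPolynomial.X a)
  let T : MvPolynomial (Fin n) ℂ := ∏ k ∈ s, W k
  have hWi : W i = (MvPolynomial.X j - MvPolynomial.X i) * w i :=
    (Finset.mul_prod_erase (Finset.univ.erase i)
      (fun k => (MvPolynomial.X k - MvPolynomial.X i : MvPolynomial (Fin n) ℂ)) (by simp [hij.symm])).symm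
  have hWj : W j = (MvPolynomial.X i - MvPolynomial.X j) * w j := by
    simp only [w]
    rw [← hs']
    exact (Finset.mul_prod_erase (Finset.univ.erase j)
      (fun k => (MvPolynomial.X k - MvPolynomial.X j : MvPolynomial (Fin n) ℂ)) (by simp [hij])).symm
  have hTi : ∏ k ∈ Finset.univ.erase i, W k = W j * T :=
    (Finset.mul_prod_erase (Finset.univ.erase i) W (by simp [hij.symm])).symm
  have hTj : ∏ k ∈ Finset.univ.erase j, W k = W i * T := by
    simp only [T]
    rw [← hs']
    exact (Finset.mul_prod_erase (Finset.univ.erase j) W (by simp [hij])).symm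
  have hV : V n = W i * (W j * T) := by
    rw [← hTi]; exact (Finset.mul_prod_erase Finset.univ W (Finset.mem_univ i)).symm
  have hmem : ∀ k ∈ s, k ≠ i ∧ k ≠ j := by intro k hk; simp [hs] at hk; tauto
  have hwi : psi i j (w i) ≠ 0 := by
    simp only [w]
    rw [map_prod, Finset.prod_ne_zero_iff]
    intro k hk
    exact psi_ne (hmem k hk).1 (fun h => (hmem k hk).1 h.1) (fun h => (hmem k hk).2 h.1)
  have hw : psi i j (w j) = psi i j (w i) := by
    simp only [w, map_prod, map_sub, psi_X]
    simp
  have hT : psi i j T ≠ 0 := by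
    simp only [T]
    rw [map_prod, Finset.prod_ne_zero_iff]
    intro k hk
    rw [W, map_prod, Finset.prod_ne_zero_iff]
    intro l hl
    exact psi_ne (Finset.ne_of_mem_erase hl) (fun h => (hmem k hk).2 h.2)
      (fun h => (hmem k hk).1 h.2)
  have hQ : psi i j (ev i q) = psi i j (ev j q) := psi_ev q i j
  have hpWi : (MvPolynomial.X i - MvPolynomial.X j) ∣ W i := by
    rw [hWi, ← neg_sub (MvPolynomial.X i), neg_mul, dvd_neg]; exact dvd_mul_right _ _
  have hpWj : (MvPolynomial.X i - MvPolynomial.X j) ∣ W j := by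
    rw [hWj]; exact dvd_mul_right _ _
  have hz : ∀ k, (MvPolynomial.X i - MvPolynomial.X j : MvPolynomial (Fin n) ℂ) ∣
      ev k q * ∏ l ∈ Finset.univ.erase k, W l := by
    intro k
    refine Dvd.dvd.mul_left ?_ _
    by_cases hk : k = i
    · exact hpWj.trans (Finset.dvd_prod_of_mem W (by simp [hk, hij.symm]))
    · exact hpWi.trans (Finset.dvd_prod_of_mem W (by simp [Ne.symm hk]))
  have main := abstract_step _ (MvPolynomial.X i - MvPolynomial.X j) (w i * (w j * T)) f T
    (ev i q * w j + ev j q * w i) (V n) (prime_sub hij).ne_zero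
    (by rw [hV, hWi, hWj]; ring) hZ
    (by
      rw [map_sub, MvPolynomial.mkDerivation_X, MvPolynomial.mkDerivation_X, hTi, hTj, hWi, hWj]
      ring)
    (dvd_mkDerivation _ _ hz _)
  rw [psi_dvd] at main ⊢
  simp only [map_mul, map_add, hw, ← hQ, map_ofNat] at main
  have h2 : (2 : MvPolynomial (Fin n) ℂ) ≠ 0 := two_ne_zero
  simp only [mul_eq_zero, h2, hT, hwi, or_false, false_or, ← two_mul] at main
  exact main

lemma W_dvd (q : (MvPolynomial (Fin n) ℂ)[X]) (i : Fin n)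
    (h : ∀ j, i ≠ j → (MvPolynomial.X i - MvPolynomial.X j) ∣ ev i q) : W i ∣ ev i q := by
  apply Finset.prod_dvd_of_isRelPrime
  · intro k hk l hl hkl
    have hk' := Finset.ne_of_mem_erase hk
    have hl' := Finset.ne_of_mem_erase hl
    exact relprime_sub hk' hl' (by tauto) (by tauto)
  · intro k hk
    rw [← neg_sub, neg_dvd]
    exact h k (Finset.ne_of_mem_erase hk).symm

lemma rename_ev (e : Equiv.Perm (Fin n)) (q : (MvPolynomial (Fin n) ℂ)[X]) (i : Fin n) :
    MvPolynomial.rename e (ev i q) = ev (e i) q := by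
  have h : (MvPolynomial.rename e : MvPolynomial (Fin n) ℂ →ₐ[ℂ] MvPolynomial (Fin n) ℂ).toRingHom.comp (phi n : MvPolynomial (Fin n) ℂ →+* MvPolynomial (Fin n) ℂ) = (phi n : MvPolynomial (Fin n) ℂ →+* MvPolynomial (Fin n) ℂ) :=
    RingHom.ext fun F => phi_symm F e
  have h2 := Polynomial.hom_eval₂ q (phi n : MvPolynomial (Fin n) ℂ →+* MvPolynomial (Fin n) ℂ)
    (MvPolynomial.rename e : MvPolynomial (Fin n) ℂ →ₐ[ℂ] MvPolynomial (Fin n) ℂ).toRingHom (-MvPolynomial.X i)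
  rw [h] at h2
  rw [ev, ev, eval_map, eval_map]
  refine h2.trans ?_
  congr 1
  simp

lemma rename_W (e : Equiv.Perm (Fin n)) (i : Fin n) :
    MvPolynomial.rename e (W i) = W (e i) := by
  rw [W, W, map_prod]
  refine Finset.prod_equiv e ?_ ?_
  · intro j; simp
  · intro j _; simp

/-- Interpolation of an equivariant family -/
lemma interp_equivariant (y : Fin n → MvPolynomial (Fin n) ℂ)
    (hy : ∀ (e : Equiv.Perm (Fin n)) i, MvPolynomial.rename e (y i) = y (e i)) :
    ∃ g : Fin n → MvPolynomial (Fin n) ℂ, ∀ i, ev i (∑ k : Fin n, C (g k) * X ^ (k : ℕ)) = y i := by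
  classical
  let M : Matrix (Fin n) (Fin n) (MvPolynomial (Fin n) ℂ) := Matrix.vandermonde fun i => -MvPolynomial.X i
  have hdet : M.det ≠ 0 := by
    rw [Matrix.det_vandermonde_ne_zero_iff]
    intro i j h
    exact MvPolynomial.X_injective (neg_injective h)
  have hdvd : ∀ k, M.det ∣ M.cramer y k := by
    intro k
    have hd : M.det = ∏ i, ∏ j ∈ Finset.Ioi i, (MvPolynomial.X i - MvPolynomial.X j) := by
      rw [Matrix.det_vandermonde]
      refine Finset.prod_congr rfl fun i _ => Finset.prod_congr rfl fun j _ => by ring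
    rw [hd, Finset.prod_sigma']
    apply Finset.prod_dvd_of_isRelPrime
    · rintro ⟨i, j⟩ h1 ⟨k, l⟩ h2 hne
      simp at h1 h2
      refine relprime_sub h1.ne h2.ne ?_ ?_
      · rintro ⟨rfl, rfl⟩; exact hne rfl
      · rintro ⟨rfl, rfl⟩; exact absurd h1 (not_lt.2 h2.le)
    · rintro ⟨i, j⟩ h1
      simp at h1
      rw [psi_dvd, Matrix.cramer_apply]
      change (psi i j : MvPolynomial (Fin n) ℂ →+* MvPolynomial (Fin n) ℂ) _ = 0
      rw [RingHom.map_det]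
      refine Matrix.det_zero_of_row_eq h1.ne ?_
      have hyij : psi i j (y i) = psi i j (y j) := by
        have h3 : (psi i j).comp (MvPolynomial.rename (Equiv.swap i j)) = psi i j := by
          apply MvPolynomial.algHom_ext
          intro a
          simp only [AlgHom.comp_apply, MvPolynomial.rename_X, psi_X]
          congr 1
          rcases eq_or_ne a i with rfl | ha
          · simp
          · rcases eq_or_ne a j with rfl | hb
            · simp
            · rw [Equiv.swap_apply_of_ne_of_ne ha hb]
        conv_rhs => rw [← Equiv.swap_apply_left i j, ← hy]
        conv_lhs => rw [← h3]
        simp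
      ext1 a
      simp only [RingHom.mapMatrix_apply, Matrix.map_apply, Matrix.updateCol_apply]
      split_ifs
      · exact hyij
      · simp [M, Matrix.vandermonde_apply, psi_X]
  choose g hg using hdvd
  have hMg : M.mulVec g = y := by
    have h1 := Matrix.mulVec_cramer M y
    have h2 : M.cramer y = M.det • g := by ext1 k; rw [hg]; rfl
    rw [h2, Matrix.mulVec_smul] at h1
    exact smul_right_injective _ hdet h1
  have hMg' : ∀ i, ∑ k : Fin n, (-MvPolynomial.X i) ^ (k : ℕ) * g k = y i := fun i =>
    congrFun hMg i
  have hsym : ∀ k, (g k).IsSymmetric := by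
    intro k e
    have h1 : M.mulVec (fun k => MvPolynomial.rename e (g k)) = y := by
      ext1 i
      have h2 := congrArg (MvPolynomial.rename e) (hMg' (e.symm i))
      rw [hy, map_sum] at h2
      simp only [map_mul, map_pow, map_neg, MvPolynomial.rename_X, Equiv.apply_symm_apply] at h2
      exact h2
    have h3 : M.mulVec ((fun k => MvPolynomial.rename e (g k)) - g) = 0 := by
      rw [Matrix.mulVec_sub, h1, hMg, sub_self]
    have h4 := Matrix.eq_zero_of_mulVec_eq_zero hdet h3
    exact sub_eq_zero.1 (congrFun h4 k)
  choose c hc using fun k => phi_surj (g k) (hsym k)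
  refine ⟨c, fun i => ?_⟩
  rw [← hMg' i]
  rw [ev, Polynomial.map_sum, eval_finsetSum]
  refine Finset.sum_congr rfl fun k _ => ?_
  rw [Polynomial.map_mul, map_C, Polynomial.map_pow, map_X, eval_mul, eval_C, eval_pow, eval_X,
    mul_comm]
  exact congrArg _ (hc k)

/-- backward direction -/
lemma backward (Δ : MvPolynomial (Fin n) ℂ) (hΔ : phi n Δ = V n ∨ phi n Δ = - V n)
    (θ : Derivation ℂ (MvPolynomial (Fin n) ℂ) (MvPolynomial (Fin n) ℂ)) (h : Δ ∣ θ Δ) :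
    ∃ g : Fin n → MvPolynomial (Fin n) ℂ, ∀ i, ev i (lin fun i => θ (MvPolynomial.X i)) =
      ev i (∑ k : Fin n, C (g k) * X ^ (k : ℕ)) * W i := by
  set q := lin fun i => θ (MvPolynomial.X i) with hq
  obtain ⟨f, hf⟩ := h
  have h1 := key_identity' θ (V n) (fun i => ev i q * ∏ k ∈ Finset.univ.erase i, W k) (by
    intro i
    rw [V, ← Finset.mul_prod_erase Finset.univ W (Finset.mem_univ i)]
    ring) Δ
  have h2 : MvPolynomial.mkDerivation ℂ (fun i => ev i q * ∏ k ∈ Finset.univ.erase i, W k) (V n)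
      = V n ^ 2 * phi n f := by
    rw [hf, map_mul] at h1
    rcases hΔ with h | h <;> rw [h] at h1
    · rw [← h1]; ring
    · rw [map_neg] at h1
      rw [← neg_inj, ← h1]; ring
  have h3 : ∀ i, W i ∣ ev i q := fun i => W_dvd q i fun j hij => root_dvd q _ h2 hij
  choose y hy using h3
  obtain ⟨g, hg⟩ := interp_equivariant y (by
    intro e i
    apply mul_left_cancel₀ (W_ne_zero (e i))
    rw [← hy, ← rename_W, ← map_mul, ← hy, rename_ev])
  exact ⟨g, fun i => by rw [hg, hy, mul_comm]⟩

/-- polynomial with given coefficients -/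
noncomputable def pol (c : Fin n → MvPolynomial (Fin n) ℂ) : (MvPolynomial (Fin n) ℂ)[X] := ∑ k : Fin n, C (c k) * X ^ (k : ℕ)

lemma pol_degree (c : Fin n → MvPolynomial (Fin n) ℂ) : (pol c).degree < n := by
  refine mem_degreeLT.1 (Submodule.sum_mem _ fun i _ => mem_degreeLT.2 ?_)
  refine lt_of_le_of_lt (degree_C_mul_X_pow_le _ _) ?_
  exact_mod_cast i.2

lemma pol_coeff (c : Fin n → MvPolynomial (Fin n) ℂ) (i : Fin n) : (pol c).coeff i = c i := by
  rw [pol, finsetSum_coeff, Finset.sum_eq_single i]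
  · simp
  · intro j _ hj
    rw [coeff_C_mul_X_pow, if_neg]
    intro h; apply hj; ext; exact h.symm
  · simp

lemma pol_add (c d : Fin n → MvPolynomial (Fin n) ℂ) : pol (c + d) = pol c + pol d := by
  simp [pol, add_mul, Finset.sum_add_distrib]

lemma pol_smul (a : MvPolynomial (Fin n) ℂ) (c : Fin n → MvPolynomial (Fin n) ℂ) : pol (a • c) = a • pol c := by
  simp [pol, Finset.smul_sum, smul_eq_C_mul, mul_assoc]

/-- The parametrization of logarithmic derivations -/
noncomputable def T (n : ℕ) : (Fin n → MvPolynomial (Fin n) ℂ) →ₗ[MvPolynomial (Fin n) ℂ] Derivation ℂ (MvPolynomial (Fin n) ℂ) (MvPolynomial (Fin n) ℂ) where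
  toFun c := MvPolynomial.mkDerivation ℂ
    (fun i => ((derivative (uP n) * pol c) %ₘ uP n).coeff (n - 1 - i))
  map_add' c d := by
    apply MvPolynomial.derivation_ext
    intro i
    simp [pol_add, mul_add, add_modByMonic]
  map_smul' a c := by
    apply MvPolynomial.derivation_ext
    intro i
    simp [pol_smul, smul_modByMonic]

lemma T_lin (c : Fin n → MvPolynomial (Fin n) ℂ) : (lin fun i => T n c (MvPolynomial.X i)) =
    (derivative (uP n) * pol c) %ₘ uP n := by
  have h : ∀ i, T n c (MvPolynomial.X i) =
    ((derivative (uP n) * pol c) %ₘ uP n).coeff (n - 1 - i) := fun i =>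
      MvPolynomial.mkDerivation_X _ _ _
  simp only [h]
  refine (lin_surj _ ?_).symm
  rw [← uP_degree]
  exact degree_modByMonic_lt _ uP_monic

lemma ev_T (c : Fin n → MvPolynomial (Fin n) ℂ) (i : Fin n) : ev i (lin fun i => T n c (MvPolynomial.X i)) =
    ev i (pol c) * W i := by
  rw [T_lin, ev_mod, ev_mul, ev_deriv, mul_comm]

lemma T_inj : Function.Injective (T n) := by
  rw [← LinearMap.ker_eq_bot, LinearMap.ker_eq_bot']
  intro c hc
  have h : pol c = 0 := by
    apply eq_of_ev _ _ (pol_degree c) (by simp)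
    intro i
    have h1 := ev_T c i
    rw [hc] at h1
    have h2 : ev i (pol c) * W i = 0 := by rw [← h1]; simp [ev, lin]
    rw [(mul_eq_zero.1 h2).resolve_right (W_ne_zero i)]
    simp [ev]
  ext1 i
  rw [← pol_coeff c i, h]; simp

lemma mem_range_T (Δ : MvPolynomial (Fin n) ℂ) (hΔ : phi n Δ = V n ∨ phi n Δ = - V n)
    (θ : Derivation ℂ (MvPolynomial (Fin n) ℂ) (MvPolynomial (Fin n) ℂ)) : θ ∈ LinearMap.range (T n) ↔ Δ ∣ θ Δ := by
  constructor
  · rintro ⟨c, rfl⟩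
    exact forward Δ hΔ _ (pol c) (ev_T c)
  · intro h
    obtain ⟨g, hg⟩ := backward Δ hΔ θ h
    refine ⟨g, ?_⟩
    apply MvPolynomial.derivation_ext
    intro i
    have h1 : (lin fun i => T n g (MvPolynomial.X i)) = lin fun i => θ (MvPolynomial.X i) := by
      apply eq_of_ev _ _ (lin_degree _) (lin_degree _)
      intro i
      rw [ev_T, hg]; rfl
    have h2 := congrArg (fun f => coeff f (n - 1 - i)) h1
    simpa only [lin_coeff] using h2

end LogDisc

/-- curve analogue of Theorem B, Remark 2.3.4.
Let `R = ℂ[a₁,…,aₙ]`, let `P = tⁿ + a₁ t^{n-1} + … + aₙ ∈ R[t]` be the universal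
monic polynomial of degree `n`, and let `Δ = Res(P, ∂P/∂t) ∈ R` be its discriminant.
Then the set of ℂ-linear derivations `θ` of `R` with `θ(Δ) ∈ (Δ)` is an `R`-submodule
of the derivations which is free of rank `n`. -/
theorem stmt_5 (n : ℕ) (hn : 1 ≤ n)
    (P : Polynomial (MvPolynomial (Fin n) ℂ))
    (hP : P = X ^ n + ∑ i : Fin n,
      C (MvPolynomial.X i) * X ^ (n - 1 - (i : ℕ)))
    (Δ : MvPolynomial (Fin n) ℂ)
    (hΔ : Δ = _root_.resultant P (derivative P) n (n - 1)) :
    ∃ N : Submodule (MvPolynomial (Fin n) ℂ)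
        (Derivation ℂ (MvPolynomial (Fin n) ℂ) (MvPolynomial (Fin n) ℂ)),
      (∀ θ : Derivation ℂ (MvPolynomial (Fin n) ℂ) (MvPolynomial (Fin n) ℂ),
        θ ∈ N ↔ θ Δ ∈ Ideal.span ({Δ} : Set (MvPolynomial (Fin n) ℂ))) ∧
      Module.Free (MvPolynomial (Fin n) ℂ) N ∧
      Module.finrank (MvPolynomial (Fin n) ℂ) N = n := by

  have hP' : P = LogDisc.uP n := hP
  have hΔ' : LogDisc.phi n Δ = LogDisc.V n ∨ LogDisc.phi n Δ = - LogDisc.V n := by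
    rw [hΔ, hP']; exact LogDisc.phi_disc
  let E := LinearEquiv.ofInjective (LogDisc.T n) LogDisc.T_inj
  refine ⟨LinearMap.range (LogDisc.T n), fun θ => ?_, Module.Free.of_equiv E, ?_⟩
  · rw [LogDisc.mem_range_T Δ hΔ', Ideal.mem_span_singleton]
  · rw [← E.finrank_eq]; simp
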